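/- arXiv:2505.15178 — 2 statements merged into one kernel-verified Lean document; each statement's English description precedes it below -/
import Mathlib

section
/- Fix θ₀ ∈ E. Suppose each map θ ↦ q θ i is twice continuously differentiable in a neighborhood of θ₀ (ContDiffAt ℝ 2), q θ₀ i > 0, and ∑_i q θ i = 1 for all θ in a neighborhood of θ₀. Define C(θ) = ∑_i q θ₀ i * Real.log (q θ₀ i / q θ i). Then C is locally given by half the Fisher quadratic form: the function θ ↦ C(θ) − (1/2) ∑_i q θ₀ i * (fderiv ℝ (fun θ' => Real.log (q θ' i)) θ₀ (θ − θ₀))² is o(‖θ − θ₀‖²) as θ → θ₀. -/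
open scoped BigOperators

open Asymptotics Filter Topology in
lemma log_aux : (fun x : ℝ => Real.log (1 + x) - x + x ^ 2 / 2) =o[𝓝 0] fun x => x ^ 2 := by
  have h1 : (fun x : ℝ => Real.log (1 + x) - x + x ^ 2 / 2) =O[𝓝 0] fun x => x ^ 3 := by
    refine IsBigO.of_bound 2 ?_
    have : ∀ᶠ x : ℝ in 𝓝 0, x ∈ Set.Ioo (-(1/2) : ℝ) (1/2) :=
      Ioo_mem_nhds (by norm_num) (by norm_num)
    filter_upwards [this] with x hx
    have hx' : |x| < 1 / 2 := abs_lt.2 hx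
    have h := Real.abs_log_sub_add_sum_range_le (x := -x) (by rw [abs_neg]; linarith) 2
    rw [abs_neg] at h
    have e : (∑ i ∈ Finset.range 2, (-x) ^ (i + 1) / ((i : ℝ) + 1)) + Real.log (1 - -x)
        = Real.log (1 + x) - x + x ^ 2 / 2 := by
      simp only [Finset.sum_range_succ, Finset.sum_range_zero, sub_neg_eq_add]
      push_cast
      ring
    rw [e] at h
    rw [Real.norm_eq_abs, norm_pow, Real.norm_eq_abs]
    refine h.trans ?_
    rw [div_le_iff₀ (by linarith)]
    have : 0 ≤ |x| ^ 3 := by positivity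
    norm_num
    nlinarith
  exact h1.trans_isLittleO (isLittleO_pow_pow (by norm_num))

open Asymptotics Filter Topology in
lemma term_aux {E : Type*} [NormedAddCommGroup E] [NormedSpace ℝ E] (f : E → ℝ) (a : E)
    (hf : DifferentiableAt ℝ f a) (hp : 0 < f a) :
    (fun θ => f a * Real.log (f a / f θ) + (f θ - f a) -
      (1 / 2) * (f a * (fderiv ℝ (fun θ' => Real.log (f θ')) a (θ - a)) ^ 2))
      =o[𝓝 a] fun θ => ‖θ - a‖ ^ 2 := by
  have hL : fderiv ℝ (fun θ' => Real.log (f θ')) a = (f a)⁻¹ • fderiv ℝ f a :=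
    (hf.hasFDerivAt.log hp.ne').fderiv
  rw [hL]
  set L := (f a)⁻¹ • fderiv ℝ f a with hLd
  have hx : (fun θ => ((f a)⁻¹ * (f θ - f a)) - L (θ - a)) =o[𝓝 a] fun θ => θ - a := by
    refine (hf.hasFDerivAt.isLittleO.const_mul_left (f a)⁻¹).congr_left fun θ => ?_
    simp [hLd, mul_sub]
  have hLO : (fun θ => L (θ - a)) =O[𝓝 a] fun θ => θ - a := L.isBigO_sub _ _
  have hxO : (fun θ => (f a)⁻¹ * (f θ - f a)) =O[𝓝 a] fun θ => θ - a :=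
    (hx.isBigO.add hLO).congr_left fun θ => by ring
  have hsq : (fun θ => ((f a)⁻¹ * (f θ - f a)) ^ 2 - (L (θ - a)) ^ 2)
      =o[𝓝 a] fun θ => ‖θ - a‖ ^ 2 := by
    refine (hx.norm_right.mul_isBigO (hxO.add hLO).norm_right).congr (fun θ => ?_) fun θ => ?_
    · ring
    · ring
  have ht : Tendsto (fun θ => (f a)⁻¹ * (f θ - f a)) (𝓝 a) (𝓝 0) := by
    have : ContinuousAt (fun θ => (f a)⁻¹ * (f θ - f a)) a :=
      (hf.continuousAt.sub continuousAt_const).const_mul _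
    simpa [ContinuousAt] using this
  have hlog := (log_aux.comp_tendsto ht).trans_isBigO (hxO.norm_right.pow 2)
  refine (((hlog.const_mul_left (-(f a))).add (hsq.const_mul_left (f a / 2)))).congr' ?_
    EventuallyEq.rfl
  filter_upwards [hf.continuousAt.eventually (lt_mem_nhds hp)] with θ hθ
  have e : 1 + (f a)⁻¹ * (f θ - f a) = f θ / f a := by field_simp; ring
  simp only [Function.comp]
  rw [e, Real.log_div hθ.ne' hp.ne', Real.log_div hp.ne' hθ.ne']
  generalize L (θ - a) = l
  field_simp
  ring

/-- Second-order expansion of the self-referenced discrete KL divergence: near `θ₀`,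
`D_KL(q θ₀ ∥ q θ)` equals half the Fisher quadratic form up to `o(‖θ − θ₀‖²)`. -/
theorem selfKL_second_order_expansion {E : Type*} [NormedAddCommGroup E] [NormedSpace ℝ E]
    {ι : Type*} [Fintype ι] (q : E → ι → ℝ) (θ₀ : E)
    (hq_smooth : ∀ i, ContDiffAt ℝ 2 (fun θ => q θ i) θ₀)
    (hq_pos : ∀ i, 0 < q θ₀ i)
    (hq_sum : ∀ᶠ θ in nhds θ₀, ∑ i, q θ i = 1) :
    (fun θ => (∑ i, q θ₀ i * Real.log (q θ₀ i / q θ i)) -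
        (1 / 2) * ∑ i, q θ₀ i *
          (fderiv ℝ (fun θ' => Real.log (q θ' i)) θ₀ (θ - θ₀)) ^ 2)
      =o[nhds θ₀] fun θ => ‖θ - θ₀‖ ^ 2 := by
  have h := Asymptotics.IsLittleO.sum (s := Finset.univ) fun i _ =>
    term_aux (fun θ => q θ i) θ₀ ((hq_smooth i).differentiableAt (by norm_num)) (hq_pos i)
  refine h.congr' ?_ Filter.EventuallyEq.rfl
  filter_upwards [hq_sum] with θ hθ
  have h0 := hq_sum.self_of_nhds
  simp only [Finset.sum_apply, Finset.sum_sub_distrib, Finset.sum_add_distrib, hθ, h0, Finset.mul_sum]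
  ring
end

section
/- Let E be a real finite-dimensional inner product space and f : E → ℝ differentiable with affine gradient: there is a continuous linear equivalence H : E ≃L[ℝ] E such that gradient f θ = gradient f θ' + H (θ − θ') for all θ, θ' ∈ E. Let g, g', h' : E → ℝ. If θ_* is a local minimum of f + g with g differentiable at θ_*, and θ_k is a local minimum of f + g' + h' with g', h' differentiable at θ_k, then θ_k − θ_* = H.symm (gradient g θ_* − gradient g' θ_k − gradient h' θ_k). -/
/-- Exact parameter-difference formula: with an affine-gradient remaining loss `f`
(with invertible Hessian `H`), the two local optimality conditions give
`θ_k − θ_* = H⁻¹ (∇g(θ_*) − ∇g'(θ_k) − ∇h'(θ_k))`. -/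
theorem parameter_difference_formula {E : Type*} [NormedAddCommGroup E]
    [InnerProductSpace ℝ E] [FiniteDimensional ℝ E]
    (f : E → ℝ) (hf : Differentiable ℝ f) (H : E ≃L[ℝ] E)
    (hgrad : ∀ θ θ' : E, gradient f θ = gradient f θ' + H (θ - θ'))
    (g g' h' : E → ℝ) (θs θk : E)
    (hmin_star : IsLocalMin (fun θ => f θ + g θ) θs)
    (hg_star : DifferentiableAt ℝ g θs)
    (hmin_k : IsLocalMin (fun θ => f θ + g' θ + h' θ) θk)
    (hg'_k : DifferentiableAt ℝ g' θk) (hh'_k : DifferentiableAt ℝ h' θk) :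
    θk - θs = H.symm (gradient g θs - gradient g' θk - gradient h' θk) := by
  have h1 : gradient f θs + gradient g θs = 0 := by
    have h := hmin_star.hasFDerivAt_eq_zero ((hf θs).hasFDerivAt.add hg_star.hasFDerivAt)
    simp only [gradient, ← map_add, h, map_zero]
  have h2 : gradient f θk + gradient g' θk + gradient h' θk = 0 := by
    have h := hmin_k.hasFDerivAt_eq_zero
      (((hf θk).hasFDerivAt.add hg'_k.hasFDerivAt).add hh'_k.hasFDerivAt)
    simp only [gradient, ← map_add, h, map_zero]
  have h3 := hgrad θk θs
  rw [ContinuousLinearEquiv.eq_symm_apply]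
  have h4 : H (θk - θs) = gradient f θk - gradient f θs := by rw [h3]; abel
  have h5 : gradient f θs = - gradient g θs := eq_neg_of_add_eq_zero_left h1
  have h6 : gradient f θk = - gradient g' θk - gradient h' θk := by
    rw [add_assoc] at h2
    rw [eq_neg_of_add_eq_zero_left h2]; abel
  rw [h4, h5, h6]; abel
end
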